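/- arXiv:2102.10241 — 2 statements merged into one kernel-verified Lean document; each statement's English description precedes it below -/
import Mathlib

section
/- Let k ≥ 2 and let s ≥ 2 be an integer. Among all pairs of positive integers n1, n2 with n1 + n2 = s, the largest eigenvalue λ(D(n1,k,n2)) is maximized when {n1, n2} = {⌊s/2⌋, ⌈s/2⌉}; that is, for all positive integers n1, n2 with n1 + n2 = s, λ(D(⌊s/2⌋,k,⌈s/2⌉)) ≥ λ(D(n1,k,n2)). -/
open Matrix

noncomputable section

/-- Distance matrix of the path on `m` vertices: entry `(i,j)` is `|i - j|`. -/
def pathD (m : ℕ) : Matrix (Fin m) (Fin m) ℝ := fun i j => |(i : ℝ) - (j : ℝ)|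

/-- The vector `(1, 2, …, m)ᵀ`. -/
def uVec (m : ℕ) : Fin m → ℝ := fun i => (i : ℝ) + 1

/-- The reversed vector `(m, m-1, …, 1)ᵀ`. -/
def wVec (m : ℕ) : Fin m → ℝ := fun i => (m : ℝ) - (i : ℝ)

/-- Largest real eigenvalue of a matrix. -/
def maxEig {ι : Type} [Fintype ι] (A : Matrix ι ι ℝ) : ℝ :=
  sSup {μ : ℝ | ∃ v : ι → ℝ, v ≠ 0 ∧ A.mulVec v = μ • v}

/-- Distance matrix of the clique path `ℙ_{n1+1,2,…,2,n2+1}` with `k` cliques. -/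
def cliquePathD (n1 k n2 : ℕ) :
    Matrix (Fin n1 ⊕ Fin (k - 1) ⊕ Fin n2) (Fin n1 ⊕ Fin (k - 1) ⊕ Fin n2) ℝ :=
  fun p q =>
    match p, q with
    | Sum.inl i, Sum.inl j => if i = j then 0 else 1
    | Sum.inl _, Sum.inr (Sum.inl j) => uVec (k - 1) j
    | Sum.inl _, Sum.inr (Sum.inr _) => (k : ℝ)
    | Sum.inr (Sum.inl i), Sum.inl _ => uVec (k - 1) i
    | Sum.inr (Sum.inl i), Sum.inr (Sum.inl j) => pathD (k - 1) i j
    | Sum.inr (Sum.inl i), Sum.inr (Sum.inr _) => wVec (k - 1) i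
    | Sum.inr (Sum.inr _), Sum.inl _ => (k : ℝ)
    | Sum.inr (Sum.inr _), Sum.inr (Sum.inl j) => wVec (k - 1) j
    | Sum.inr (Sum.inr i), Sum.inr (Sum.inr j) => if i = j then 0 else 1

/-!
Collapsing each end clique to a point turns the vertex set into a path, and the distances into
those of a tree metric `M` on that path, with a half-edge attached at either end. Up to the diagonal
terms `M j j`, the quadratic form of the distance matrix at `v` is the form of `M` at the vector `P`
of fiber sums of `v`.

If `n1 * n2 ≤ c * d` and `n1 + n2 = c + d`, then `(c, d) = p (n1, n2) + q (n2, n1)` with weights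
`p + q = 1`. Let `v` be a nonnegative eigenvector for the end cliques `n1, n2`, mix `P` with its
mirror image with the same weights, and spread the result evenly over the fibers for the end cliques
`c, d`. Since `M` is of negative type, its form is concave on vectors of given sum, so mixing does
not decrease it. By the Cauchy–Schwarz inequality neither the diagonal terms nor the norm of the
vector increase. Hence the Rayleigh quotient does not decrease.
-/

theorem sq_add_mul_le_add_mul_mul_add_mul {p q x y a b c d : ℝ} (hp : 0 ≤ p) (hq : 0 ≤ q)
    (ha : 0 ≤ a) (hb : 0 ≤ b) (hc : 0 ≤ c) (hd : 0 ≤ d) (hx : x ^ 2 ≤ a * c)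
    (hy : y ^ 2 ≤ b * d) :
    (p * x + q * y) ^ 2 ≤ (p * a + q * b) * (p * c + q * d) := by
  have hscale {z e f : ℝ} (hz : z ^ 2 ≤ e * f) (t : ℝ) : (t * z) ^ 2 ≤ t * e * (t * f) := by
    nlinarith [mul_le_mul_of_nonneg_left hz (sq_nonneg t)]
  have h := Finset.sum_sq_le_sum_mul_sum_of_sq_le_mul Finset.univ
    (r := ![p * x, q * y]) (f := ![p * a, q * b]) (g := ![p * c, q * d])
    (fun | 0, _ => mul_nonneg hp ha | 1, _ => mul_nonneg hq hb)
    (fun | 0, _ => mul_nonneg hp hc | 1, _ => mul_nonneg hq hd)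
    (fun | 0, _ => hscale hx p | 1, _ => hscale hy q)
  simpa [Fin.sum_univ_two] using h

theorem mem_segment_of_mul_le_mul {a b c d : ℝ} (hsum : a + b = c + d) (hmul : a * b ≤ c * d) :
    c ∈ segment ℝ a b := by
  have hprod : (c - a) * (c - b) ≤ 0 := by
    obtain rfl : d = a + b - c := by linarith
    linarith
  rw [segment_eq_uIcc, Set.mem_uIcc]
  rcases mul_nonpos_iff.1 hprod with ⟨h₁, h₂⟩ | ⟨h₁, h₂⟩
  · exact .inl ⟨by linarith, by linarith⟩
  · exact .inr ⟨by linarith, by linarith⟩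

theorem mul_le_half_mul_half_succ (a b : ℕ) : a * b ≤ (a + b) / 2 * ((a + b + 1) / 2) := by
  obtain ⟨c, h | h⟩ := Nat.even_or_odd' (a + b)
  · rw [h, show 2 * c / 2 = c by omega, show (2 * c + 1) / 2 = c by omega]
    nlinarith [sq_nonneg ((a : ℤ) - b)]
  · rw [h, show (2 * c + 1) / 2 = c by omega, show (2 * c + 1 + 1) / 2 = c + 1 by omega]
    nlinarith [sq_nonneg ((a : ℤ) - b)]

section maxEig

variable {ι : Type} [Fintype ι] {A : Matrix ι ι ℝ}

theorem maxEig_eq_sSup_spectrum [DecidableEq ι] (A : Matrix ι ι ℝ) :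
    maxEig A = sSup (spectrum ℝ A) := by
  refine congrArg sSup (Set.ext fun μ => ?_)
  rw [← Matrix.spectrum_toLin', ← Module.End.hasEigenvalue_iff_mem_spectrum]
  constructor
  · rintro ⟨v, hv, h⟩
    exact Module.End.hasEigenvalue_of_hasEigenvector
      ⟨Module.End.mem_eigenspace_iff.2 (by rwa [toLin'_apply]), hv⟩
  · intro h
    obtain ⟨v, hv⟩ := h.exists_hasEigenvector
    exact ⟨v, hv.2, by rw [← toLin'_apply, hv.apply_eq_smul]⟩

theorem posSemidef_maxEig_smul_one_sub [DecidableEq ι] (hA : A.IsHermitian) :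
    (maxEig A • (1 : Matrix ι ι ℝ) - A).PosSemidef := by
  rw [← Algebra.algebraMap_eq_smul_one, posSemidef_iff_isHermitian_and_spectrum_nonneg]
  refine ⟨(isHermitian_diagonal _).sub hA, ?_⟩
  rw [← spectrum.singleton_sub_eq, maxEig_eq_sSup_spectrum]
  rintro _ ⟨_, rfl, μ, hμ, rfl⟩
  exact sub_nonneg.2 (le_csSup A.finite_real_spectrum.bddAbove hμ)

theorem dotProduct_mulVec_le_maxEig_mul (hA : A.IsHermitian) (v : ι → ℝ) :
    v ⬝ᵥ A *ᵥ v ≤ maxEig A * (v ⬝ᵥ v) := by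
  classical
  have h := (posSemidef_maxEig_smul_one_sub hA).dotProduct_mulVec_nonneg v
  simpa [sub_mulVec, smul_mulVec] using h

theorem le_maxEig_of_mul_le_dotProduct_mulVec (hA : A.IsHermitian) {μ : ℝ} {v : ι → ℝ}
    (hv : v ≠ 0) (h : μ * (v ⬝ᵥ v) ≤ v ⬝ᵥ A *ᵥ v) : μ ≤ maxEig A :=
  le_of_mul_le_mul_right (h.trans (dotProduct_mulVec_le_maxEig_mul hA v))
    (by simpa using dotProduct_star_self_pos_iff.2 hv)

theorem apply_self_le_maxEig (hA : A.IsHermitian) (i : ι) : A i i ≤ maxEig A := by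
  classical
  refine le_maxEig_of_mul_le_dotProduct_mulVec hA (v := Pi.single i 1) (by simp) ?_
  simp

theorem exists_mulVec_eq_maxEig_smul [Nonempty ι] (hA : A.IsHermitian) :
    ∃ v : ι → ℝ, v ≠ 0 ∧ A *ᵥ v = maxEig A • v := by
  classical
  have hne : (spectrum ℝ A).Nonempty :=
    hA.spectrum_real_eq_range_eigenvalues ▸ Set.range_nonempty _
  have hmem := hne.csSup_mem A.finite_real_spectrum
  rw [← maxEig_eq_sSup_spectrum, ← Matrix.spectrum_toLin'] at hmem
  obtain ⟨v, hv⟩ := (Module.End.HasEigenvalue.of_mem_spectrum hmem).exists_hasEigenvector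
  exact ⟨v, hv.2, by rw [← toLin'_apply, hv.apply_eq_smul]⟩

theorem dotProduct_mulVec_le_abs (hA : ∀ i j, 0 ≤ A i j) (v : ι → ℝ) :
    v ⬝ᵥ A *ᵥ v ≤ |v| ⬝ᵥ A *ᵥ |v| := by
  simp only [dotProduct, mulVec, Finset.mul_sum]
  refine Finset.sum_le_sum fun i _ => Finset.sum_le_sum fun j _ => ?_
  calc v i * (A i j * v j) ≤ |v i * (A i j * v j)| := le_abs_self _
    _ = |v| i * (A i j * |v| j) := by simp [abs_mul, abs_of_nonneg (hA i j)]

theorem exists_nonneg_mulVec_eq_maxEig_smul [Nonempty ι] (hA : A.IsHermitian)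
    (hA₀ : ∀ i j, 0 ≤ A i j) : ∃ v : ι → ℝ, 0 ≤ v ∧ v ≠ 0 ∧ A *ᵥ v = maxEig A • v := by
  classical
  obtain ⟨v, hv, hAv⟩ := exists_mulVec_eq_maxEig_smul hA
  have habs : |v| ⬝ᵥ |v| = v ⬝ᵥ v := by simp [dotProduct]
  have hmax : maxEig A * (|v| ⬝ᵥ |v|) ≤ |v| ⬝ᵥ A *ᵥ |v| := by
    simpa [habs, hAv] using dotProduct_mulVec_le_abs hA₀ v
  have hzero : |v| ⬝ᵥ (maxEig A • (1 : Matrix ι ι ℝ) - A) *ᵥ |v| = 0 := by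
    have := dotProduct_mulVec_le_maxEig_mul hA |v|
    simp only [sub_mulVec, smul_mulVec, one_mulVec, dotProduct_sub, dotProduct_smul, smul_eq_mul]
    linarith
  have hker := (posSemidef_maxEig_smul_one_sub hA).dotProduct_mulVec_zero_iff |v|
  rw [star_trivial, hzero, sub_mulVec, smul_mulVec, one_mulVec, sub_eq_zero] at hker
  exact ⟨|v|, abs_nonneg v, by simpa using hv, (hker.1 rfl).symm⟩

end maxEig

section IsNegType

variable {J : Type*} [Fintype J]

/-- Conditional negative semidefiniteness: the quadratic form of `M` is nonpositive on vectors with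
zero sum. For a distance matrix this says that the metric is of negative type. -/
def IsNegType (M : Matrix J J ℝ) : Prop :=
  ∀ v : J → ℝ, ∑ j, v j = 0 → v ⬝ᵥ M *ᵥ v ≤ 0

theorem isNegType_sub_sq (f : J → ℝ) : IsNegType (of fun i j => (f i - f j) ^ 2) := by
  intro v hv
  have hform : v ⬝ᵥ of (fun i j => (f i - f j) ^ 2) *ᵥ v = -2 * (∑ i, v i * f i) ^ 2 := by
    calc v ⬝ᵥ of (fun i j => (f i - f j) ^ 2) *ᵥ v
        = ∑ i, ∑ j, ((v i * f i ^ 2) * v j + v i * (v j * f j ^ 2)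
            - 2 * ((v i * f i) * (v j * f j))) := by
          simp only [dotProduct, mulVec, of_apply, Finset.mul_sum]
          exact Finset.sum_congr rfl fun i _ => Finset.sum_congr rfl fun j _ => by ring
      _ = (∑ i, v i * f i ^ 2) * ∑ j, v j + (∑ i, v i) * ∑ j, v j * f j ^ 2
            - 2 * ((∑ i, v i * f i) * ∑ j, v j * f j) := by
          simp only [Finset.sum_add_distrib, Finset.sum_sub_distrib, ← Finset.mul_sum,
            ← Finset.sum_mul]
      _ = -2 * (∑ i, v i * f i) ^ 2 := by rw [hv]; ring
  rw [hform]
  exact mul_nonpos_of_nonpos_of_nonneg (by norm_num) (sq_nonneg _)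

open MeasureTheory in
theorem isNegType_integral {Ω : Type*} [MeasurableSpace Ω] {μ : Measure Ω}
    {M : Ω → Matrix J J ℝ} (hint : ∀ i j, Integrable (fun ω => M ω i j) μ)
    (hM : ∀ ω, IsNegType (M ω)) : IsNegType (of fun i j => ∫ ω, M ω i j ∂μ) := by
  intro v hv
  have hform : v ⬝ᵥ of (fun i j => ∫ ω, M ω i j ∂μ) *ᵥ v = ∫ ω, v ⬝ᵥ M ω *ᵥ v ∂μ := by
    simp only [dotProduct, mulVec, of_apply, Finset.mul_sum]
    rw [integral_finsetSum _ fun i _ => integrable_finsetSum _ fun j _ =>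
      ((hint i j).mul_const _).const_mul _]
    refine Finset.sum_congr rfl fun i _ => ?_
    rw [integral_finsetSum _ fun j _ => ((hint i j).mul_const _).const_mul _]
    simp only [integral_const_mul, integral_mul_const]
  rw [hform]
  exact integral_nonpos fun ω => hM ω v hv

theorem sq_indicator_Ioi_sub_indicator_Ioi (a b : ℝ) :
    (fun c => ((Set.Ioi a).indicator 1 c - (Set.Ioi b).indicator 1 c : ℝ) ^ 2) =
      (Set.uIoc a b).indicator 1 := by
  classical
  ext c
  simp only [Set.indicator_apply, Set.mem_Ioi, Set.mem_uIoc, Pi.one_apply]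
  grind

open MeasureTheory in
theorem isNegType_abs_sub (s : J → ℝ) : IsNegType (of fun i j => |s i - s j|) := by
  have habs (i j : J) : |s i - s j| =
      ∫ c, ((Set.Ioi (s i)).indicator 1 c - (Set.Ioi (s j)).indicator 1 c : ℝ) ^ 2 := by
    rw [sq_indicator_Ioi_sub_indicator_Ioi, integral_indicator_one measurableSet_uIoc,
      measureReal_def, Real.volume_uIoc, ENNReal.toReal_ofReal (abs_nonneg _), abs_sub_comm]
  have hint (i j : J) : Integrable
      fun c => ((Set.Ioi (s i)).indicator 1 c - (Set.Ioi (s j)).indicator 1 c : ℝ) ^ 2 := by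
    rw [sq_indicator_Ioi_sub_indicator_Ioi, integrable_indicator_iff measurableSet_uIoc]
    exact integrableOn_const (by simp [Real.volume_uIoc])
  simp_rw [habs]
  exact isNegType_integral hint fun c => isNegType_sub_sq fun i => (Set.Ioi (s i)).indicator 1 c

theorem IsNegType.add_add {M : Matrix J J ℝ} (hM : IsNegType M) (h : J → ℝ) :
    IsNegType (of fun i j => M i j + h i + h j) := by
  intro v hv
  have hrow (i : J) : (of (fun i j => M i j + h i + h j) *ᵥ v) i = (M *ᵥ v) i + h ⬝ᵥ v := by
    simp [mulVec, dotProduct, add_mul, Finset.sum_add_distrib, ← Finset.mul_sum, hv]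
  have hform : v ⬝ᵥ of (fun i j => M i j + h i + h j) *ᵥ v = v ⬝ᵥ M *ᵥ v := by
    simp [dotProduct, hrow, mul_add, Finset.sum_add_distrib, ← Finset.sum_mul, hv]
  exact hform.trans_le (hM v hv)

end IsNegType

section permMix

variable {J : Type*} {σ : Equiv.Perm J} {p q : ℝ}

/-- The combination `p x + q (x ∘ σ)` of a vector and its rearrangement by `σ`. When `σ` exchanges
the two ends of a path, it moves mass from one end to the other. -/
def permMix (σ : Equiv.Perm J) (p q : ℝ) (x : J → ℝ) : J → ℝ :=
  p • x + q • (x ∘ σ)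

theorem permMix_apply (σ : Equiv.Perm J) (p q : ℝ) (x : J → ℝ) (j : J) :
    permMix σ p q x j = p * x j + q * x (σ j) :=
  rfl

theorem permMix_nonneg (hp : 0 ≤ p) (hq : 0 ≤ q) {x : J → ℝ} (hx : 0 ≤ x) :
    0 ≤ permMix σ p q x :=
  fun j => add_nonneg (mul_nonneg hp (hx j)) (mul_nonneg hq (hx (σ j)))

theorem permMix_sq_le_mul (hp : 0 ≤ p) (hq : 0 ≤ q) {x a b : J → ℝ} (ha : 0 ≤ a) (hb : 0 ≤ b)
    (h : x ^ 2 ≤ a * b) : permMix σ p q x ^ 2 ≤ permMix σ p q a * permMix σ p q b := fun j =>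
  sq_add_mul_le_add_mul_mul_add_mul hp hq (ha j) (ha (σ j)) (hb j) (hb (σ j)) (h j) (h (σ j))

variable [Fintype J]

theorem sum_mul_permMix (hpq : p + q = 1) {g : J → ℝ} (hg : ∀ j, g (σ j) = g j) (x : J → ℝ) :
    ∑ j, g j * permMix σ p q x j = ∑ j, g j * x j := by
  have hreindex : ∑ j, g j * x (σ j) = ∑ j, g j * x j := by
    simpa only [hg] using Equiv.sum_comp σ fun j => g j * x j
  calc ∑ j, g j * permMix σ p q x j = p * ∑ j, g j * x j + q * ∑ j, g j * x (σ j) := by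
        simp only [permMix_apply, mul_add, Finset.sum_add_distrib, Finset.mul_sum, mul_left_comm]
    _ = ∑ j, g j * x j := by rw [hreindex, ← add_mul, hpq, one_mul]

theorem sum_permMix (hpq : p + q = 1) (x : J → ℝ) : ∑ j, permMix σ p q x j = ∑ j, x j := by
  simpa using sum_mul_permMix (σ := σ) (g := 1) hpq (fun _ => rfl) x

theorem dotProduct_mulVec_smul_add_smul (M : Matrix J J ℝ) (hpq : p + q = 1) (x y : J → ℝ) :
    (p • x + q • y) ⬝ᵥ M *ᵥ (p • x + q • y) =
      p * (x ⬝ᵥ M *ᵥ x) + q * (y ⬝ᵥ M *ᵥ y) - p * q * ((x - y) ⬝ᵥ M *ᵥ (x - y)) := by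
  obtain rfl : q = 1 - p := by linarith
  simp only [mulVec_add, mulVec_sub, mulVec_smul, dotProduct_add, add_dotProduct, dotProduct_sub,
    sub_dotProduct, dotProduct_smul, smul_dotProduct, smul_eq_mul]
  ring

theorem IsNegType.dotProduct_mulVec_le_permMix {M : Matrix J J ℝ} (hM : IsNegType M)
    (hσ : ∀ i j, M (σ i) (σ j) = M i j) (hp : 0 ≤ p) (hq : 0 ≤ q) (hpq : p + q = 1) (x : J → ℝ) :
    x ⬝ᵥ M *ᵥ x ≤ permMix σ p q x ⬝ᵥ M *ᵥ permMix σ p q x := by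
  have hreindex : (x ∘ σ) ⬝ᵥ M *ᵥ (x ∘ σ) = x ⬝ᵥ M *ᵥ x := by
    have hMσ : M.submatrix σ σ = M := Matrix.ext hσ
    conv_lhs => rw [← hMσ, submatrix_mulVec_equiv]
    simp [Function.comp_assoc]
  have hneg : (x - x ∘ σ) ⬝ᵥ M *ᵥ (x - x ∘ σ) ≤ 0 :=
    hM _ (by simp [Finset.sum_sub_distrib, Equiv.sum_comp σ x])
  rw [permMix, dotProduct_mulVec_smul_add_smul M hpq, hreindex, ← add_mul, hpq, one_mul]
  linarith [mul_nonpos_of_nonneg_of_nonpos (mul_nonneg hp hq) hneg]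

end permMix

section pushforward

open Finset

variable {V J : Type*}

section Finite

variable [Finite V] [Finite J]

theorem funOnFinite_map_nonneg (π : V → J) {v : V → ℝ} (hv : 0 ≤ v) : 0 ≤ FunOnFinite.map π v := by
  classical
  have := Fintype.ofFinite V
  intro j
  rw [FunOnFinite.map_apply_apply]
  exact sum_nonneg fun p _ => hv p

theorem funOnFinite_map_sq_le (π : V → J) (v : V → ℝ) :
    FunOnFinite.map π v ^ 2 ≤ FunOnFinite.map π 1 * FunOnFinite.map π (v ^ 2) := by
  classical
  have := Fintype.ofFinite V
  intro j
  simp only [Pi.pow_apply, Pi.mul_apply, FunOnFinite.map_apply_apply]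
  exact sum_sq_le_sum_mul_sum_of_sq_le_mul _ (by simp) (fun _ _ => sq_nonneg _) (by simp)

/-- The vector on `V` obtained by distributing the mass `P j` evenly over the fiber of `π` over `j`.
It minimizes the sum of squares among the vectors with these fiber sums. The mass prescribed on an
empty fiber is lost. -/
def spread (π : V → J) (P : J → ℝ) (p : V) : ℝ :=
  P (π p) / FunOnFinite.map π (1 : V → ℝ) (π p)

theorem funOnFinite_map_spread {π : V → J} {P : J → ℝ}
    (hP : ∀ j, FunOnFinite.map π (1 : V → ℝ) j = 0 → P j = 0) :
    FunOnFinite.map π (spread π P) = P := by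
  classical
  have := Fintype.ofFinite V
  ext j
  have hconst : FunOnFinite.map π (spread π P) j =
      ∑ p with π p = j, P j / FunOnFinite.map π (1 : V → ℝ) j := by
    rw [FunOnFinite.map_apply_apply]
    exact sum_congr rfl fun p hp => by rw [spread, (mem_filter.1 hp).2]
  have hsize : FunOnFinite.map π (1 : V → ℝ) j = #{p | π p = j} := by
    simp [FunOnFinite.map_apply_apply]
  rw [hconst, sum_const, nsmul_eq_mul, ← hsize, mul_div_cancel_of_imp' (hP j)]

end Finite

variable [Fintype V] [Fintype J]

theorem sum_mul_funOnFinite_map (π : V → J) (g : J → ℝ) (v : V → ℝ) :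
    ∑ j, g j * FunOnFinite.map π v j = ∑ p, g (π p) * v p := by
  classical
  simp_rw [FunOnFinite.map_apply_apply, mul_sum]
  rw [← sum_fiberwise univ π fun p => g (π p) * v p]
  exact sum_congr rfl fun j _ => sum_congr rfl fun p hp => by rw [(mem_filter.1 hp).2]

theorem sum_funOnFinite_map (π : V → J) (v : V → ℝ) : ∑ j, FunOnFinite.map π v j = ∑ p, v p := by
  simpa using sum_mul_funOnFinite_map π 1 v

theorem dotProduct_submatrix_mulVec (M : Matrix J J ℝ) (π : V → J) (v : V → ℝ) :
    v ⬝ᵥ M.submatrix π π *ᵥ v = FunOnFinite.map π v ⬝ᵥ M *ᵥ FunOnFinite.map π v := by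
  have hrow (p : V) : (M.submatrix π π *ᵥ v) p = (M *ᵥ FunOnFinite.map π v) (π p) :=
    (sum_mul_funOnFinite_map π (M (π p)) v).symm
  rw [dotProduct_comm, dotProduct_comm (FunOnFinite.map π v)]
  simp only [dotProduct, hrow, sum_mul_funOnFinite_map]

theorem sum_mul_spread_sq (π : V → J) (g P : J → ℝ) :
    ∑ p, g (π p) * spread π P p ^ 2 =
      ∑ j, g j * (P j ^ 2 / FunOnFinite.map π (1 : V → ℝ) j) := by
  have h := sum_mul_funOnFinite_map π
    (fun j => g j * (P j / FunOnFinite.map π (1 : V → ℝ) j) ^ 2) 1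
  simp only [Pi.one_apply, mul_one] at h
  refine h.symm.trans (sum_congr rfl fun j _ => ?_)
  rcases eq_or_ne (FunOnFinite.map π (1 : V → ℝ) j) 0 with h0 | h0
  · simp [h0]
  · field_simp

theorem sum_mul_spread_sq_le {π : V → J} {g P T : J → ℝ} (hg : 0 ≤ g) (hT : 0 ≤ T)
    (hP : P ^ 2 ≤ FunOnFinite.map π 1 * T) :
    ∑ p, g (π p) * spread π P p ^ 2 ≤ ∑ j, g j * T j := by
  rw [sum_mul_spread_sq]
  refine sum_le_sum fun j _ => mul_le_mul_of_nonneg_left ?_ (hg j)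
  exact div_le_of_le_mul₀ (funOnFinite_map_nonneg π zero_le_one j) (hT j)
    ((hP j).trans_eq (mul_comm _ _))

end pushforward

section spreadMix

variable {V W J : Type*} {π : V → J} {ρ : W → J} {σ : Equiv.Perm J} {p q : ℝ}

section Finite

variable [Finite V] [Finite W] [Finite J]

theorem permMix_funOnFinite_map_sq_le (hp : 0 ≤ p) (hq : 0 ≤ q)
    (hcard : FunOnFinite.map ρ (1 : W → ℝ) = permMix σ p q (FunOnFinite.map π 1)) (v : V → ℝ) :
    permMix σ p q (FunOnFinite.map π v) ^ 2 ≤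
      FunOnFinite.map ρ 1 * permMix σ p q (FunOnFinite.map π (v ^ 2)) :=
  hcard ▸ permMix_sq_le_mul hp hq (funOnFinite_map_nonneg π zero_le_one)
    (funOnFinite_map_nonneg π fun j => sq_nonneg (v j)) (funOnFinite_map_sq_le π v)

theorem funOnFinite_map_spread_permMix (hp : 0 ≤ p) (hq : 0 ≤ q)
    (hcard : FunOnFinite.map ρ (1 : W → ℝ) = permMix σ p q (FunOnFinite.map π 1)) (v : V → ℝ) :
    FunOnFinite.map ρ (spread ρ (permMix σ p q (FunOnFinite.map π v))) =
      permMix σ p q (FunOnFinite.map π v) := by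
  refine funOnFinite_map_spread fun j hj => ?_
  -- The Cauchy–Schwarz bound also shows that no mass is prescribed on an empty fiber.
  have h := permMix_funOnFinite_map_sq_le hp hq hcard v j
  rw [Pi.mul_apply, hj, zero_mul] at h
  exact pow_eq_zero_iff two_ne_zero |>.1 (h.antisymm (sq_nonneg _))

end Finite

theorem sum_mul_spread_permMix_sq_le [Fintype V] [Fintype W] [Finite J] (hp : 0 ≤ p) (hq : 0 ≤ q)
    (hpq : p + q = 1)
    (hcard : FunOnFinite.map ρ (1 : W → ℝ) = permMix σ p q (FunOnFinite.map π 1))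
    {g : J → ℝ} (hg : 0 ≤ g) (hgσ : ∀ j, g (σ j) = g j) (v : V → ℝ) :
    ∑ x, g (ρ x) * spread ρ (permMix σ p q (FunOnFinite.map π v)) x ^ 2 ≤
      ∑ x, g (π x) * v x ^ 2 := by
  have := Fintype.ofFinite J
  calc ∑ x, g (ρ x) * spread ρ (permMix σ p q (FunOnFinite.map π v)) x ^ 2
    _ ≤ ∑ j, g j * permMix σ p q (FunOnFinite.map π (v ^ 2)) j :=
        sum_mul_spread_sq_le hg
          (permMix_nonneg hp hq (funOnFinite_map_nonneg π fun x => sq_nonneg (v x)))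
          (permMix_funOnFinite_map_sq_le hp hq hcard v)
    _ = ∑ j, g j * FunOnFinite.map π (v ^ 2) j := sum_mul_permMix hpq hgσ _
    _ = ∑ x, g (π x) * v x ^ 2 := sum_mul_funOnFinite_map π g _

end spreadMix

section twinBlowup

variable {V W J : Type*} [DecidableEq V]

/-- The blow-up of the dissimilarity `M` along `π`: the index `j` is replaced by the fiber of `π`
over `j`, whose distinct elements are at mutual distance `M j j`. The diagonal is zero. -/
def twinBlowup (M : Matrix J J ℝ) (π : V → J) : Matrix V V ℝ :=
  M.submatrix π π - diagonal fun p => M (π p) (π p)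

theorem twinBlowup_apply (M : Matrix J J ℝ) (π : V → J) (p q : V) :
    twinBlowup M π p q = if p = q then 0 else M (π p) (π q) := by
  by_cases h : p = q <;> simp [twinBlowup, h]

theorem isHermitian_twinBlowup {M : Matrix J J ℝ} (hM : M.IsHermitian) (π : V → J) :
    (twinBlowup M π).IsHermitian :=
  (hM.submatrix π).sub (isHermitian_diagonal _)

variable [Fintype V] [Fintype J]

theorem dotProduct_twinBlowup_mulVec (M : Matrix J J ℝ) (π : V → J) (v : V → ℝ) :
    v ⬝ᵥ twinBlowup M π *ᵥ v =
      FunOnFinite.map π v ⬝ᵥ M *ᵥ FunOnFinite.map π v - ∑ p, M (π p) (π p) * v p ^ 2 := by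
  rw [twinBlowup, sub_mulVec, dotProduct_sub, dotProduct_submatrix_mulVec]
  congr 1
  exact Finset.sum_congr rfl fun p _ => by rw [mulVec_diagonal]; ring

theorem dotProduct_twinBlowup_mulVec_le_spread_permMix [Fintype W] [DecidableEq W]
    {π : V → J} {ρ : W → J} {σ : Equiv.Perm J} {p q : ℝ} {M : Matrix J J ℝ} (hneg : IsNegType M)
    (h₀ : ∀ j, 0 ≤ M j j) (hσ : ∀ i j, M (σ i) (σ j) = M i j) (hp : 0 ≤ p) (hq : 0 ≤ q)
    (hpq : p + q = 1)
    (hcard : FunOnFinite.map ρ (1 : W → ℝ) = permMix σ p q (FunOnFinite.map π 1)) (v : V → ℝ) :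
    v ⬝ᵥ twinBlowup M π *ᵥ v ≤ spread ρ (permMix σ p q (FunOnFinite.map π v)) ⬝ᵥ
      twinBlowup M ρ *ᵥ spread ρ (permMix σ p q (FunOnFinite.map π v)) := by
  rw [dotProduct_twinBlowup_mulVec, dotProduct_twinBlowup_mulVec,
    funOnFinite_map_spread_permMix hp hq hcard]
  exact sub_le_sub (hneg.dotProduct_mulVec_le_permMix hσ hp hq hpq _)
    (sum_mul_spread_permMix_sq_le hp hq hpq hcard h₀ (fun j => hσ j j) v)

end twinBlowup

theorem maxEig_twinBlowup_le {V W : Type} {J : Type*} [Fintype V] [Fintype W] [Fintype J]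
    [DecidableEq V] [DecidableEq W] [Nonempty V] {M : Matrix J J ℝ} (hM : M.IsHermitian)
    (hneg : IsNegType M) (h₀ : ∀ i j, 0 ≤ M i j) {σ : Equiv.Perm J}
    (hσ : ∀ i j, M (σ i) (σ j) = M i j) {π : V → J} {ρ : W → J} {p q : ℝ} (hp : 0 ≤ p)
    (hq : 0 ≤ q) (hpq : p + q = 1)
    (hcard : FunOnFinite.map ρ (1 : W → ℝ) = permMix σ p q (FunOnFinite.map π 1)) :
    maxEig (twinBlowup M π) ≤ maxEig (twinBlowup M ρ) := by
  have hB := isHermitian_twinBlowup hM π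
  have hB₀ (x y : V) : 0 ≤ twinBlowup M π x y := by
    rw [twinBlowup_apply]; exact ite_nonneg le_rfl (h₀ _ _)
  obtain ⟨v, hv, hv₀, hvB⟩ := exists_nonneg_mulVec_eq_maxEig_smul hB hB₀
  have hmax : 0 ≤ maxEig (twinBlowup M π) := by
    obtain ⟨x⟩ := ‹Nonempty V›
    exact (hB₀ x x).trans (apply_self_le_maxEig hB x)
  set w := spread ρ (permMix σ p q (FunOnFinite.map π v))
  have hw₀ : w ≠ 0 := by
    intro h
    have hmass : ∑ x, w x = ∑ x, v x := by
      rw [← sum_funOnFinite_map ρ, funOnFinite_map_spread_permMix hp hq hcard, sum_permMix hpq,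
        sum_funOnFinite_map]
    exact hv₀ ((Fintype.sum_eq_zero_iff_of_nonneg hv).1 (by simpa [h] using hmass.symm))
  have hnorm : w ⬝ᵥ w ≤ v ⬝ᵥ v := by
    simpa [dotProduct, ← sq] using
      sum_mul_spread_permMix_sq_le (g := 1) hp hq hpq hcard zero_le_one (fun _ => rfl) v
  refine le_maxEig_of_mul_le_dotProduct_mulVec (isHermitian_twinBlowup hM ρ) hw₀ ?_
  calc maxEig (twinBlowup M π) * (w ⬝ᵥ w) ≤ maxEig (twinBlowup M π) * (v ⬝ᵥ v) :=
        mul_le_mul_of_nonneg_left hnorm hmax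
    _ = v ⬝ᵥ twinBlowup M π *ᵥ v := by rw [hvB, dotProduct_smul, smul_eq_mul]
    _ ≤ w ⬝ᵥ twinBlowup M ρ *ᵥ w :=
        dotProduct_twinBlowup_mulVec_le_spread_permMix hneg (fun j => h₀ j j) hσ hp hq hpq hcard v

section cliquePath

/-- The position on the real line of each vertex of a clique path with `m` cut vertices, its two end
cliques being collapsed to the indices `Sum.inl ()` and `Sum.inr (Sum.inr ())`. The vertices of an
end clique hang by half-edges from its midpoint. -/
def linePosition (m : ℕ) : Unit ⊕ Fin m ⊕ Unit → ℝ
  | .inl _ => 1 / 2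
  | .inr (.inl i) => i + 1
  | .inr (.inr _) => m + 1 / 2

/-- The distance from each vertex of a clique path to its `linePosition`. -/
def legLength (m : ℕ) : Unit ⊕ Fin m ⊕ Unit → ℝ
  | .inl _ => 1 / 2
  | .inr (.inl _) => 0
  | .inr (.inr _) => 1 / 2

/-- The distances of a clique path between the classes of its vertices, where each end clique is one
class. The diagonal entry of a class is the distance between two distinct elements of it, and zero
for a cut vertex. -/
def cliquePathQuotient (m : ℕ) : Matrix (Unit ⊕ Fin m ⊕ Unit) (Unit ⊕ Fin m ⊕ Unit) ℝ :=
  of fun i j => |linePosition m i - linePosition m j| + legLength m i + legLength m j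

/-- The map collapsing each end clique of a clique path to a point. -/
def collapseEnds (n1 m n2 : ℕ) : Fin n1 ⊕ Fin m ⊕ Fin n2 → Unit ⊕ Fin m ⊕ Unit :=
  Sum.map (fun _ => ()) (Sum.map id fun _ => ())

/-- The reversal of a clique path with collapsed ends. -/
def pathReflection (m : ℕ) : Equiv.Perm (Unit ⊕ Fin m ⊕ Unit) :=
  Function.Involutive.toPerm
    (fun
      | .inl _ => .inr (.inr ())
      | .inr (.inl i) => .inr (.inl i.rev)
      | .inr (.inr _) => .inl ())
    (by rintro (_ | _ | _) <;> simp)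

@[simp]
theorem pathReflection_inl (m : ℕ) (u : Unit) : pathReflection m (.inl u) = .inr (.inr ()) :=
  rfl

@[simp]
theorem pathReflection_inr_inl (m : ℕ) (i : Fin m) :
    pathReflection m (.inr (.inl i)) = .inr (.inl i.rev) :=
  rfl

@[simp]
theorem pathReflection_inr_inr (m : ℕ) (u : Unit) : pathReflection m (.inr (.inr u)) = .inl () :=
  rfl

theorem linePosition_pathReflection (m : ℕ) (j : Unit ⊕ Fin m ⊕ Unit) :
    linePosition m (pathReflection m j) = m + 1 - linePosition m j := by
  rcases j with _ | i | _
  · simp only [pathReflection_inl, linePosition]; ring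
  · simp only [pathReflection_inr_inl, linePosition, Fin.val_rev, Nat.cast_sub i.isLt]
    push_cast
    ring
  · simp only [pathReflection_inr_inr, linePosition]; ring

theorem legLength_pathReflection (m : ℕ) (j : Unit ⊕ Fin m ⊕ Unit) :
    legLength m (pathReflection m j) = legLength m j := by
  rcases j with _ | _ | _ <;> simp [legLength]

theorem cliquePathQuotient_pathReflection (m : ℕ) (i j : Unit ⊕ Fin m ⊕ Unit) :
    cliquePathQuotient m (pathReflection m i) (pathReflection m j) = cliquePathQuotient m i j := by
  simp only [cliquePathQuotient, of_apply, linePosition_pathReflection, legLength_pathReflection,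
    sub_sub_sub_cancel_left, abs_sub_comm]

theorem isHermitian_cliquePathQuotient (m : ℕ) : (cliquePathQuotient m).IsHermitian := by
  ext i j
  simp [cliquePathQuotient, abs_sub_comm, add_right_comm]

theorem isNegType_cliquePathQuotient (m : ℕ) : IsNegType (cliquePathQuotient m) :=
  (isNegType_abs_sub (linePosition m)).add_add (legLength m)

theorem cliquePathQuotient_nonneg (m : ℕ) (i j : Unit ⊕ Fin m ⊕ Unit) :
    0 ≤ cliquePathQuotient m i j := by
  have hleg (j : Unit ⊕ Fin m ⊕ Unit) : 0 ≤ legLength m j := by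
    rcases j with _ | _ | _ <;> simp [legLength]
  exact add_nonneg (add_nonneg (abs_nonneg _) (hleg i)) (hleg j)

theorem cliquePathD_eq_twinBlowup (n1 n2 : ℕ) {k : ℕ} (hk : 1 ≤ k) :
    cliquePathD n1 k n2 = twinBlowup (cliquePathQuotient (k - 1)) (collapseEnds n1 (k - 1) n2) := by
  obtain ⟨m, rfl⟩ : ∃ m, k = m + 1 := ⟨k - 1, by omega⟩
  have hle (i : Fin m) : (i : ℝ) + 1 ≤ m := by exact_mod_cast i.isLt
  have hleft (i : Fin m) : |(i : ℝ) + 1 - 1 / 2| = i + 1 / 2 := by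
    rw [abs_of_nonneg] <;> linarith [(i : ℕ).cast_nonneg (α := ℝ)]
  have hright (i : Fin m) : |(m : ℝ) + 1 / 2 - (i + 1)| = m - i - 1 / 2 := by
    rw [abs_of_nonneg] <;> linarith [hle i]
  ext x y
  rw [twinBlowup_apply]
  rcases x with x | x | x <;> rcases y with y | y | y <;>
    simp only [cliquePathD, cliquePathQuotient, collapseEnds, linePosition, legLength, uVec, wVec,
      pathD, of_apply, Sum.map_inl, Sum.map_inr, id_eq, Sum.inl.injEq, Sum.inr.injEq, reduceCtorEq,
      if_false, Nat.add_sub_cancel]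
  · norm_num
  · rw [abs_sub_comm, hleft]; ring
  · rw [abs_sub_comm, abs_of_nonneg] <;> push_cast <;> linarith
  · rw [hleft]; ring
  · split_ifs with h <;> simp [h]
  · rw [abs_sub_comm, hright]; ring
  · rw [abs_of_nonneg] <;> push_cast <;> linarith
  · rw [hright]; ring
  · norm_num

theorem funOnFinite_map_collapseEnds_one (n1 m n2 : ℕ) :
    FunOnFinite.map (collapseEnds n1 m n2) 1 =
      (Sum.elim (fun _ => n1) (Sum.elim (fun _ => 1) fun _ => n2) : Unit ⊕ Fin m ⊕ Unit → ℝ) := by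
  ext j
  rw [FunOnFinite.map_apply_apply, Finset.sum_filter, Fintype.sum_sum_type, Fintype.sum_sum_type]
  rcases j with _ | i | _ <;> simp [collapseEnds]

end cliquePath

theorem maxEig_cliquePathD_balanced_max_general {k n1 n2 c d : ℕ} (hk : 2 ≤ k)
    (hsum : n1 + n2 = c + d) (hmul : n1 * n2 ≤ c * d) :
    maxEig (cliquePathD n1 k n2) ≤ maxEig (cliquePathD c k d) := by
  obtain ⟨p, q, hp, hq, hpq, hc⟩ : (c : ℝ) ∈ segment ℝ (n1 : ℝ) n2 :=
    mem_segment_of_mul_le_mul (d := d) (by exact_mod_cast hsum) (by exact_mod_cast hmul)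
  have hd : p * n2 + q * n1 = (d : ℝ) := by
    have hsum' : (n1 + n2 : ℝ) = c + d := by exact_mod_cast hsum
    simp only [smul_eq_mul] at hc
    linear_combination (n1 + n2 : ℝ) * hpq + hsum' - hc
  have : Nonempty (Fin (k - 1)) := ⟨⟨0, by omega⟩⟩
  rw [cliquePathD_eq_twinBlowup n1 n2 (by omega), cliquePathD_eq_twinBlowup c d (by omega)]
  refine maxEig_twinBlowup_le (isHermitian_cliquePathQuotient _) (isNegType_cliquePathQuotient _)
    (cliquePathQuotient_nonneg _) (cliquePathQuotient_pathReflection _) hp hq hpq ?_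
  ext j
  rw [permMix_apply, funOnFinite_map_collapseEnds_one, funOnFinite_map_collapseEnds_one]
  rcases j with _ | _ | _
  · exact hc.symm
  · simpa using hpq.symm
  · exact hd.symm

/-- Among all clique paths `ℙ_{n1+1,2,…,2,n2+1}` with `k` cliques and `n1 + n2 = s`,
the distance spectral radius is maximized at `{n1, n2} = {⌊s/2⌋, ⌈s/2⌉}`. -/
theorem maxEig_cliquePathD_balanced_max
    (k s : ℕ) (hk : 2 ≤ k) (hs : 2 ≤ s) :
    ∀ n1 n2 : ℕ, 1 ≤ n1 → 1 ≤ n2 → n1 + n2 = s →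
      maxEig (cliquePathD n1 k n2) ≤ maxEig (cliquePathD (s / 2) k ((s + 1) / 2)) := by
  rintro n1 n2 - - rfl
  exact maxEig_cliquePathD_balanced_max_general hk (by omega) (mul_le_half_mul_half_succ n1 n2)
end
end

section
/- Let m ≥ 2 and let X ∈ ℝ^m be any eigenvector of D_m corresponding to the largest eigenvalue λ(D_m). Then X is symmetric under reversal, i.e. X_i = X_{m+1−i} for all 1 ≤ i ≤ m; consequently X^T (u_m − w_m) = 0. -/
/-!
On vectors with coordinate sum zero, the quadratic form of the distance matrix of points on a line
is nonpositive: `|a - b|` is the integral over `t` of the squared difference of the indicators of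
`t ≤ a` and `t ≤ b`, and the matrix of squared differences of a function `f` has the quadratic form
`-2 (y ⬝ᵥ f) ^ 2` there. The reversal `σ` preserves the distances on a path, so along with `X` the
difference `X - X ∘ σ` satisfies the eigenvalue equation. It has coordinate sum zero, so it vanishes
as soon as the eigenvalue is positive, and the largest eigenvalue of a nonzero symmetric matrix
with zero trace is positive.
-/

open Matrix

noncomputable section

section Symmetry

variable {ι R : Type*} [Fintype ι]

lemma mulVec_comp_perm_of_submatrix_eq [NonUnitalNonAssocSemiring R] {A : Matrix ι ι R}
    {σ : Equiv.Perm ι} (hσ : A.submatrix σ σ = A) (v : ι → R) :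
    A *ᵥ (v ∘ σ) = (A *ᵥ v) ∘ σ := by
  conv_lhs => rw [← hσ, submatrix_mulVec_equiv]
  simp [Function.comp_assoc]

lemma dotProduct_sub_comp_perm_eq_zero [NonUnitalNonAssocRing R] {σ : Equiv.Perm ι} {v : ι → R}
    (hv : v ∘ σ = v) (u : ι → R) : v ⬝ᵥ (u - u ∘ σ) = 0 := by
  have : v ⬝ᵥ (u ∘ σ) = v ⬝ᵥ u := by
    conv_lhs => rw [← hv, comp_equiv_dotProduct_comp_equiv]
  rw [dotProduct_sub, this, sub_self]

end Symmetry

section CondNegSemidef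

open MeasureTheory

variable {ι α : Type*} [Fintype ι]

/-- Conditional negative semidefiniteness: the quadratic form of `A` is nonpositive on the vectors
whose coordinates sum to zero. It forces an eigenvector for a positive eigenvalue to be invariant
under the permutations preserving `A`. Symmetry of `A` is not part of the definition. -/
def IsCondNegSemidef (A : Matrix ι ι ℝ) : Prop :=
  ∀ y : ι → ℝ, ∑ i, y i = 0 → y ⬝ᵥ A *ᵥ y ≤ 0

lemma IsCondNegSemidef.eq_zero_of_mulVec_eq_smul {A : Matrix ι ι ℝ} (hA : IsCondNegSemidef A)
    {μ : ℝ} (hμ : 0 < μ) {y : ι → ℝ} (hy : A *ᵥ y = μ • y) (hsum : ∑ i, y i = 0) : y = 0 := by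
  have hle : μ * (y ⬝ᵥ y) ≤ 0 := by simpa [hy] using hA y hsum
  have hnonneg : 0 ≤ y ⬝ᵥ y := by simpa using dotProduct_self_star_nonneg y
  exact dotProduct_self_eq_zero.1 (hnonneg.antisymm' (nonpos_of_mul_nonpos_right hle hμ))

lemma IsCondNegSemidef.comp_perm_eq_of_mulVec_eq_smul {A : Matrix ι ι ℝ}
    (hA : IsCondNegSemidef A) {σ : Equiv.Perm ι} (hσ : A.submatrix σ σ = A) {μ : ℝ} (hμ : 0 < μ)
    {v : ι → ℝ} (hv : A *ᵥ v = μ • v) : v ∘ σ = v := by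
  have heig : A *ᵥ (v ∘ σ - v) = μ • (v ∘ σ - v) := by
    rw [mulVec_sub, mulVec_comp_perm_of_submatrix_eq hσ, hv, smul_sub]
    rfl
  have hsum : ∑ i, (v ∘ σ - v) i = 0 := by
    simp [Finset.sum_sub_distrib, Equiv.sum_comp σ v]
  exact sub_eq_zero.1 (hA.eq_zero_of_mulVec_eq_smul hμ heig hsum)

lemma isCondNegSemidef_sub_sq (f : ι → ℝ) :
    IsCondNegSemidef (of fun i j => (f i - f j) ^ 2) := by
  intro y hy
  have hform : y ⬝ᵥ (of fun i j => (f i - f j) ^ 2) *ᵥ y = -2 * (y ⬝ᵥ f) ^ 2 :=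
    calc y ⬝ᵥ (of fun i j => (f i - f j) ^ 2) *ᵥ y
      _ = ∑ i, ∑ j, (y i * f i ^ 2 * y j + y i * (y j * f j ^ 2)
            - 2 * (y i * f i * (y j * f j))) := by
        simp only [dotProduct, mulVec, of_apply, Finset.mul_sum]
        congr! 2 with i _ j _
        ring
      _ = (∑ i, y i * f i ^ 2) * ∑ j, y j + (∑ i, y i) * ∑ j, y j * f j ^ 2
            - 2 * (y ⬝ᵥ f * (y ⬝ᵥ f)) := by
        simp only [Finset.sum_sub_distrib, Finset.sum_add_distrib, ← Finset.mul_sum,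
          ← Finset.sum_mul, dotProduct]
      _ = -2 * (y ⬝ᵥ f) ^ 2 := by
        rw [hy]
        ring
  nlinarith [sq_nonneg (y ⬝ᵥ f)]

lemma IsCondNegSemidef.integral [MeasurableSpace α] {ν : Measure α} {A : α → Matrix ι ι ℝ}
    (hA : ∀ t, IsCondNegSemidef (A t)) (hint : ∀ i j, Integrable (fun t => A t i j) ν) :
    IsCondNegSemidef (of fun i j => ∫ t, A t i j ∂ν) := by
  intro y hy
  have hform : y ⬝ᵥ (of fun i j => ∫ t, A t i j ∂ν) *ᵥ y = ∫ t, y ⬝ᵥ A t *ᵥ y ∂ν := by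
    have hint_row (i : ι) : ∀ j ∈ Finset.univ, Integrable (fun t => A t i j * y j) ν :=
      fun j _ => (hint i j).mul_const (y j)
    simp only [dotProduct, mulVec, of_apply]
    rw [integral_finsetSum _ fun i _ => (integrable_finsetSum _ (hint_row i)).const_mul (y i)]
    simp only [integral_const_mul, integral_mul_const, integral_finsetSum _ (hint_row _)]
  rw [hform]
  exact integral_nonpos fun t => hA t y hy

end CondNegSemidef

section LineDistance

open MeasureTheory

lemma sq_indicator_Iic_sub (a b : ℝ) :
    (fun t => ((Set.Iic a).indicator 1 t - (Set.Iic b).indicator 1 t : ℝ) ^ 2) =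
      (Set.uIoc a b).indicator 1 := by
  ext t
  by_cases ha : t ≤ a <;> by_cases hb : t ≤ b <;>
    simp [Set.mem_uIoc, ha, hb, not_lt.2, lt_of_not_ge]

lemma abs_sub_eq_integral_sq_indicator_Iic_sub (a b : ℝ) :
    |a - b| = ∫ t, ((Set.Iic a).indicator 1 t - (Set.Iic b).indicator 1 t : ℝ) ^ 2 := by
  rw [sq_indicator_Iic_sub, integral_indicator_one measurableSet_uIoc, measureReal_def,
    Real.volume_uIoc, ENNReal.toReal_ofReal (abs_nonneg _), abs_sub_comm]

lemma integrable_sq_indicator_Iic_sub (a b : ℝ) : Integrable fun t =>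
    ((Set.Iic a).indicator 1 t - (Set.Iic b).indicator 1 t : ℝ) ^ 2 := by
  rw [sq_indicator_Iic_sub]
  exact (integrable_indicator_iff measurableSet_uIoc).2 (integrableOn_const (by simp))

lemma isCondNegSemidef_abs_sub {ι : Type*} [Fintype ι] (x : ι → ℝ) :
    IsCondNegSemidef (of fun i j => |x i - x j|) := by
  let f (t : ℝ) (i : ι) : ℝ := (Set.Iic (x i)).indicator 1 t
  have h : IsCondNegSemidef (of fun i j => ∫ t, (f t i - f t j) ^ 2) :=
    IsCondNegSemidef.integral (fun t => isCondNegSemidef_sub_sq (f t))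
      fun i j => integrable_sq_indicator_Iic_sub (x i) (x j)
  simpa only [abs_sub_eq_integral_sq_indicator_Iic_sub] using h

end LineDistance

section MaxEig

lemma bddAbove_eigenvalues {ι : Type*} [Fintype ι] (A : Matrix ι ι ℝ) :
    BddAbove {μ : ℝ | ∃ v : ι → ℝ, v ≠ 0 ∧ A *ᵥ v = μ • v} := by
  refine ((Module.End.finite_hasEigenvalue A.mulVecLin).subset ?_).bddAbove
  rintro μ ⟨v, hv, hAv⟩
  exact Module.End.hasEigenvalue_of_hasEigenvector ⟨Module.End.mem_eigenspace_iff.2 hAv, hv⟩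

lemma le_maxEig {ι : Type} [Fintype ι] {A : Matrix ι ι ℝ} {v : ι → ℝ} (hv : v ≠ 0) {μ : ℝ}
    (hAv : A *ᵥ v = μ • v) : μ ≤ maxEig A :=
  le_csSup (bddAbove_eigenvalues A) ⟨v, hv, hAv⟩

lemma exists_eigenvalues_pos_of_trace_nonneg {ι : Type*} [Fintype ι] [DecidableEq ι]
    {A : Matrix ι ι ℝ} (hA : A.IsHermitian) (htr : 0 ≤ A.trace) (hne : A ≠ 0) :
    ∃ i, 0 < hA.eigenvalues i := by
  by_contra! hnonpos
  have hsum : 0 ≤ ∑ i, hA.eigenvalues i := by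
    simpa [hA.trace_eq_sum_eigenvalues] using htr
  have hzero := (Finset.sum_eq_zero_iff_of_nonpos fun i _ => hnonpos i).1
    ((Finset.sum_nonpos fun i _ => hnonpos i).antisymm hsum)
  exact hne (hA.eigenvalues_eq_zero_iff.1 (funext fun i => hzero i (Finset.mem_univ i)))

lemma maxEig_pos_of_trace_nonneg {ι : Type} [Fintype ι] {A : Matrix ι ι ℝ} (hA : A.IsHermitian)
    (htr : 0 ≤ A.trace) (hne : A ≠ 0) : 0 < maxEig A := by
  classical
  obtain ⟨i, hi⟩ := exists_eigenvalues_pos_of_trace_nonneg hA htr hne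
  have hv : (hA.eigenvectorBasis i).ofLp ≠ 0 := by
    simpa using hA.eigenvectorBasis.orthonormal.ne_zero i
  exact hi.trans_le (le_maxEig hv (hA.mulVec_eigenvectorBasis i))

end MaxEig

section Path

variable (m : ℕ)

lemma isHermitian_pathD : (pathD m).IsHermitian := by
  ext i j
  simp [pathD, abs_sub_comm]

lemma trace_pathD : (pathD m).trace = 0 := by
  simp [trace, pathD]

lemma pathD_ne_zero {m : ℕ} (hm : 2 ≤ m) : pathD m ≠ 0 := by
  intro h
  simpa [pathD] using congrFun₂ h ⟨0, by lia⟩ ⟨1, by lia⟩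

lemma maxEig_pathD_pos {m : ℕ} (hm : 2 ≤ m) : 0 < maxEig (pathD m) :=
  maxEig_pos_of_trace_nonneg (isHermitian_pathD m) (trace_pathD m).ge (pathD_ne_zero hm)

lemma isCondNegSemidef_pathD : IsCondNegSemidef (pathD m) :=
  isCondNegSemidef_abs_sub fun i : Fin m => (i : ℝ)

lemma cast_val_rev {m : ℕ} (i : Fin m) : (i.rev : ℝ) = m - (i + 1) := by
  rw [Fin.val_rev, Nat.cast_sub i.isLt]
  push_cast
  rfl

lemma submatrix_rev_pathD : (pathD m).submatrix Fin.revPerm Fin.revPerm = pathD m := by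
  ext i j
  simp only [submatrix_apply, pathD, Fin.revPerm_apply, cast_val_rev]
  rw [abs_sub_comm]
  congr 1
  ring

lemma uVec_comp_rev : uVec m ∘ Fin.revPerm = wVec m := by
  ext i
  simp only [Function.comp_apply, uVec, wVec, Fin.revPerm_apply, cast_val_rev]
  ring

end Path

theorem perron_eigenvector_pathD_symmetric_general {ι : Type*} [Fintype ι] {A : Matrix ι ι ℝ}
    (hA : IsCondNegSemidef A) {σ : Equiv.Perm ι} (hσ : A.submatrix σ σ = A) {μ : ℝ} (hμ : 0 < μ)
    {X : ι → ℝ} (hEig : A *ᵥ X = μ • X) (u : ι → ℝ) :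
    (∀ i, X i = X (σ i)) ∧ X ⬝ᵥ (u - u ∘ σ) = 0 := by
  have hX : X ∘ σ = X := hA.comp_perm_eq_of_mulVec_eq_smul hσ hμ hEig
  exact ⟨fun i => (congrFun hX i).symm, dotProduct_sub_comp_perm_eq_zero hX u⟩

/-- Any eigenvector of `D_m` for the largest eigenvalue is symmetric under reversal of the
indices; consequently it is orthogonal to `u_m − w_m`. -/
theorem perron_eigenvector_pathD_symmetric
    (m : ℕ) (hm : 2 ≤ m) (X : Fin m → ℝ) (hX : X ≠ 0)
    (hEig : (pathD m).mulVec X = maxEig (pathD m) • X) :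
    (∀ i : Fin m, X i = X i.rev) ∧ X ⬝ᵥ (uVec m - wVec m) = 0 := by
  exact uVec_comp_rev m ▸ perron_eigenvector_pathD_symmetric_general (isCondNegSemidef_pathD m)
    (submatrix_rev_pathD m) (maxEig_pathD_pos hm) hEig (uVec m)
end
end
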